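/- arXiv:math/0601361 — 3 statements merged into one kernel-verified Lean document; each statement's English description precedes it below -/
import Mathlib

section
/- Let n and p be integers with 2 < p < n−1 and p odd. A permutation π of {0,1}^n is an automorphism of Q_n^p if and only if it is an automorphism of Q_n; that is, Aut(Q_n^p) and Aut(Q_n) are the same subgroup of the permutation group on the vertex set. -/
/-- The p-th power of a graph `G`: distinct vertices are adjacent iff their
distance in `G` satisfies `0 < d_G(v,w) ≤ p` (in particular they are reachable). -/
def gpow {V : Type*} (G : SimpleGraph V) (p : ℕ) : SimpleGraph V where
  Adj v w := v ≠ w ∧ G.Reachable v w ∧ G.dist v w ≤ p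
  symm := ⟨fun v w h => ⟨h.1.symm, h.2.1.symm, by rw [SimpleGraph.dist_comm]; exact h.2.2⟩⟩
  loopless := ⟨fun v h => h.1 rfl⟩

/-- A permutation of the vertices is an automorphism of `G` iff it preserves adjacency. -/
def IsAuto {V : Type*} (G : SimpleGraph V) (π : Equiv.Perm V) : Prop :=
  ∀ v w, G.Adj (π v) (π w) ↔ G.Adj v w

/-- The `n`-dimensional hypercube: vertices are `{0,1}^n`, adjacent iff they differ in
exactly one coordinate. -/
def Q (n : ℕ) : SimpleGraph (Fin n → Bool) where
  Adj v w := (Finset.univ.filter fun i => v i ≠ w i).card = 1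
  symm := by
    refine ⟨?_⟩
    intro v w h
    rw [show (Finset.univ.filter fun i => w i ≠ v i) = (Finset.univ.filter fun i => v i ≠ w i) from by
      apply Finset.filter_congr; intro i _; simp [ne_comm]]
    exact h
  loopless := by refine ⟨?_⟩; intro v h; simp at h

/-!
A permutation preserving the relation of being at distance at most `p` preserves the number of
points within `p` of both of two given points. By distance-transitivity that number depends only on
the distance of the pair; it is weakly decreasing in the distance and, when `1 ≤ p ≤ n - 2`, drops
strictly from distance `2` to distance `3`. Hence the relation of being at distance at most `2` is
preserved, and so is that for `p + 1`, an even number. Finally two points with a common point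
at distance exactly `p + 1` are at even distance, which separates distance `2` from distance `1`.
-/

lemma exists_perm_apply_eq_and_apply_eq {α : Type*} {a b a' b' : α} (h : a = b ↔ a' = b') :
    ∃ f : Equiv.Perm α, f a = a' ∧ f b = b' := by
  classical
  refine ⟨(Equiv.swap a a').trans (Equiv.swap (Equiv.swap a a' b) b'), ?_, by simp⟩
  grind

section HammingSpace

variable {ι α : Type*} [Fintype ι] [DecidableEq α]

lemma exists_hammingDist_eq_of_le {k : ℕ} {x y : ι → α} (hk : k ≤ hammingDist x y) :
    ∃ z, hammingDist x z = k ∧ hammingDist z y = hammingDist x y - k ∧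
      ∀ i, z i = x i ∨ z i = y i := by
  classical
  obtain ⟨S, hS, rfl⟩ := Finset.exists_subset_card_eq hk
  have mem_S : ∀ i ∈ S, x i ≠ y i := fun i hi => (Finset.mem_filter.1 (hS hi)).2
  refine ⟨S.piecewise y x, ?_, ?_, fun i => S.piecewise_cases y x (fun a => a = x i ∨ a = y i)
    (.inr rfl) (.inl rfl)⟩
  · refine congrArg Finset.card (Finset.ext fun i => ?_)
    by_cases hi : i ∈ S <;> simp [hi, mem_S]
  · rw [hammingDist, hammingDist, ← Finset.card_sdiff_of_subset hS]
    refine congrArg Finset.card (Finset.ext fun i => ?_)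
    by_cases hi : i ∈ S <;> simp [hi]

lemma hammingDist_le_add_iff {a b : ℕ} {x y : ι → α} :
    hammingDist x y ≤ a + b ↔ ∃ z, hammingDist x z ≤ a ∧ hammingDist z y ≤ b := by
  constructor
  · intro h
    obtain ⟨z, hxz, hzy, -⟩ := exists_hammingDist_eq_of_le (min_le_left (hammingDist x y) a)
    exact ⟨z, by omega, by omega⟩
  · rintro ⟨z, hxz, hzy⟩
    exact (hammingDist_triangle x z y).trans (add_le_add hxz hzy)

lemma hammingDist_comp_perm (σ : Equiv.Perm ι) (x y : ι → α) :
    hammingDist (x ∘ σ) (y ∘ σ) = hammingDist x y :=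
  Finset.card_equiv σ (by simp)

lemma exists_perm_apply_ne_iff {x y x' y' : ι → α} (h : hammingDist x y = hammingDist x' y') :
    ∃ σ : Equiv.Perm ι, ∀ i, x (σ i) ≠ y (σ i) ↔ x' i ≠ y' i := by
  classical
  have hcard : Fintype.card {i // x' i ≠ y' i} = Fintype.card {i // x i ≠ y i} := by
    simpa only [Fintype.card_subtype, hammingDist] using h.symm
  let e := Fintype.equivOfCardEq hcard
  refine ⟨e.extendSubtype, fun i => ⟨fun hxy => ?_, e.extendSubtype_mem i⟩⟩
  by_contra! hi
  exact e.extendSubtype_not_mem i (not_not.2 hi) hxy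

lemma exists_isometry_apply_eq {x y x' y' : ι → α} (h : hammingDist x y = hammingDist x' y') :
    ∃ τ : Equiv.Perm (ι → α), (∀ u v, hammingDist (τ u) (τ v) = hammingDist u v) ∧
      τ x = x' ∧ τ y = y' := by
  obtain ⟨σ, hσ⟩ := exists_perm_apply_ne_iff h
  choose f hfx hfy using fun i => exists_perm_apply_eq_and_apply_eq (not_iff_not.1 (hσ i))
  refine ⟨(σ.symm.arrowCongr (Equiv.refl α)).trans (Equiv.piCongrRight f), fun u v => ?_,
    funext hfx, funext hfy⟩
  exact (hammingDist_comp _ fun i => (f i).injective).trans (hammingDist_comp_perm σ u v)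

/-- `π` preserves the relation of being at Hamming distance at most `k`, in both directions. -/
def PreservesHammingLE (k : ℕ) (π : Equiv.Perm (ι → α)) : Prop :=
  ∀ x y, hammingDist (π x) (π y) ≤ k ↔ hammingDist x y ≤ k

namespace PreservesHammingLE

variable {π : Equiv.Perm (ι → α)} {a b k : ℕ}

lemma add (ha : PreservesHammingLE a π) (hb : PreservesHammingLE b π) :
    PreservesHammingLE (a + b) π := by
  intro x y
  rw [hammingDist_le_add_iff, hammingDist_le_add_iff, π.surjective.exists]
  simp only [ha _ _, hb _ _]

lemma mul_left (hk : PreservesHammingLE k π) (m : ℕ) : PreservesHammingLE (m * k) π := by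
  induction m with
  | zero => intro x y; simp
  | succ m ih => rw [Nat.succ_mul]; exact ih.add hk

lemma eq_succ_iff (hk : PreservesHammingLE k π) (hk' : PreservesHammingLE (k + 1) π)
    (x y : ι → α) : hammingDist (π x) (π y) = k + 1 ↔ hammingDist x y = k + 1 := by
  have := hk x y
  have := hk' x y
  omega

end PreservesHammingLE

variable [DecidableEq ι] [Fintype α]

/-- The points at Hamming distance at most `p` from both `x` and `y`: the intersection of two closed
balls. -/
def commonBall (p : ℕ) (x y : ι → α) : Finset (ι → α) :=
  Finset.univ.filter fun z => hammingDist z x ≤ p ∧ hammingDist z y ≤ p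

lemma mem_commonBall {p : ℕ} {x y z : ι → α} :
    z ∈ commonBall p x y ↔ hammingDist z x ≤ p ∧ hammingDist z y ≤ p := by
  simp [commonBall]

lemma PreservesHammingLE.card_commonBall {p : ℕ} {π : Equiv.Perm (ι → α)}
    (hπ : PreservesHammingLE p π) (x y : ι → α) :
    (commonBall p (π x) (π y)).card = (commonBall p x y).card :=
  (Finset.card_equiv π fun z => by simp only [mem_commonBall, hπ z _]).symm

lemma card_commonBall_eq_of_hammingDist_eq {x y x' y' : ι → α} (p : ℕ)
    (h : hammingDist x y = hammingDist x' y') :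
    (commonBall p x y).card = (commonBall p x' y').card := by
  obtain ⟨τ, hτ, rfl, rfl⟩ := exists_isometry_apply_eq h
  have hτp : PreservesHammingLE p τ := fun u v => by rw [hτ]
  exact (hτp.card_commonBall x y).symm

end HammingSpace

section Flip

variable {ι : Type*} [DecidableEq ι]

/-- Negate the coordinates of `x` that lie in `U`. -/
def flipOn (U : Finset ι) (x : ι → Bool) : ι → Bool :=
  fun i => if i ∈ U then !x i else x i

lemma flipOn_of_mem {U : Finset ι} {i : ι} (hi : i ∈ U) (x : ι → Bool) :
    flipOn U x i = !x i :=
  if_pos hi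

lemma flipOn_of_notMem {U : Finset ι} {i : ι} (hi : i ∉ U) (x : ι → Bool) :
    flipOn U x i = x i :=
  if_neg hi

lemma flipOn_involutive (U : Finset ι) : Function.Involutive (flipOn U) := by
  intro x
  funext i
  by_cases hi : i ∈ U <;> simp [flipOn, hi]

variable [Fintype ι]

lemma hammingDist_flipOn_left (U : Finset ι) (x y : ι → Bool) :
    hammingDist (flipOn U x) y = hammingDist x (flipOn U y) := by
  refine congrArg Finset.card (Finset.filter_congr fun i _ => ?_)
  by_cases hi : i ∈ U <;> simp [flipOn, hi]

lemma hammingDist_flipOn_of_forall_eq {U : Finset ι} {x y : ι → Bool} (h : ∀ i ∈ U, x i = y i) :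
    hammingDist x (flipOn U y) = hammingDist x y + U.card := by
  have hdisj : Disjoint (Finset.univ.filter fun i => x i ≠ y i) U :=
    Finset.disjoint_left.2 fun i hi hU => (Finset.mem_filter.1 hi).2 (h i hU)
  rw [hammingDist, hammingDist, ← Finset.card_union_of_disjoint hdisj]
  refine congrArg Finset.card (Finset.ext fun i => ?_)
  rw [Finset.mem_union, Finset.mem_filter_univ, Finset.mem_filter_univ]
  by_cases hi : i ∈ U <;> simp [flipOn, hi, h]

lemma hammingDist_flipOn_of_forall_ne {U : Finset ι} {x y : ι → Bool} (h : ∀ i ∈ U, x i ≠ y i) :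
    hammingDist x (flipOn U y) + U.card = hammingDist x y := by
  have hflip : ∀ i ∈ U, x i = flipOn U y i := fun i hi => by
    rw [flipOn_of_mem hi]
    exact Bool.eq_not_of_ne (h i hi)
  rw [← hammingDist_flipOn_of_forall_eq hflip, flipOn_involutive]

lemma hammingDist_flipOn_singleton_of_eq {x y : ι → Bool} {i : ι} (h : x i = y i) :
    hammingDist x (flipOn {i} y) = hammingDist x y + 1 := by
  simpa using hammingDist_flipOn_of_forall_eq (U := {i}) (by simpa using h)

lemma hammingDist_flipOn_singleton_of_ne {x y : ι → Bool} {i : ι} (h : x i ≠ y i) :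
    hammingDist x (flipOn {i} y) + 1 = hammingDist x y := by
  simpa using hammingDist_flipOn_of_forall_ne (U := {i}) (by simpa using h)

omit [DecidableEq ι] in
lemma exists_equidistant {r : ℕ} {x y : ι → Bool} {i : ι} (hxy : hammingDist x y = 2)
    (hi : x i = y i) (hr : 1 ≤ r) (hrn : r + 2 ≤ Fintype.card ι) :
    ∃ z, hammingDist z x = r ∧ hammingDist z y = r ∧ z i = x i := by
  classical
  -- Start at a midpoint and move away from `x` and `y` simultaneously, where the two agree.
  obtain ⟨m, hxm, hmy, hm⟩ := exists_hammingDist_eq_of_le (x := x) (y := y) (k := 1) (by omega)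
  let D := Finset.univ.filter fun j => x j ≠ y j
  have hcard : r - 1 ≤ (insert i D)ᶜ.card := by
    have hD : D.card = 2 := hxy
    have := Finset.card_insert_le i D
    rw [Finset.card_compl]
    omega
  obtain ⟨U, hU, hUcard⟩ := Finset.exists_subset_card_eq hcard
  have hUout : ∀ j ∈ U, j ≠ i ∧ x j = y j := fun j hj => by
    simpa [D] using hU hj
  have hmx : ∀ j, x j = y j → m j = x j := fun j hj => (hm j).elim id (·.trans hj.symm)
  have hx : ∀ j ∈ U, x j = m j := fun j hj => (hmx j (hUout j hj).2).symm
  have hy : ∀ j ∈ U, y j = m j := fun j hj => (hUout j hj).2.symm.trans (hx j hj)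
  refine ⟨flipOn U m, ?_, ?_, ?_⟩
  · rw [hammingDist_comm, hammingDist_flipOn_of_forall_eq hx]
    omega
  · rw [hammingDist_comm, hammingDist_flipOn_of_forall_eq hy, hammingDist_comm y m]
    omega
  · rw [flipOn_of_notMem fun hiU => (hUout i hiU).1 rfl, hmx i hi]

lemma flipOn_mem_commonBall_sdiff {p : ℕ} {x y z : ι → Bool} {i : ι} (hi : x i ≠ y i)
    (hz : z ∈ commonBall p x y \ commonBall p x (flipOn {i} y)) :
    flipOn {i} z ∈ commonBall p x (flipOn {i} y) \ commonBall p x y ∧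
      hammingDist (flipOn {i} z) x < p := by
  simp only [Finset.mem_sdiff, mem_commonBall, hammingDist_flipOn_left,
    flipOn_involutive {i} y] at hz ⊢
  have hzy : z i = y i := by
    by_contra hne
    have := hammingDist_flipOn_singleton_of_ne hne
    omega
  have := hammingDist_flipOn_singleton_of_ne (hzy.trans_ne hi.symm)
  omega

lemma card_commonBall_le_card_commonBall_flipOn (p : ℕ) {x y : ι → Bool} {i : ι}
    (hi : x i ≠ y i) :
    (commonBall p x y).card ≤ (commonBall p x (flipOn {i} y)).card :=
  Finset.card_sdiff_le_card_sdiff_iff.1 <| Finset.card_le_card_of_injOn (flipOn {i})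
    (fun _ hz => (flipOn_mem_commonBall_sdiff hi hz).1) (flipOn_involutive {i}).injective.injOn

lemma card_commonBall_lt_card_commonBall_flipOn {p : ℕ} (hp : 1 ≤ p)
    (hpn : p + 2 ≤ Fintype.card ι) {x y : ι → Bool} {i : ι} (hi : x i ≠ y i)
    (hxy : hammingDist x y = 3) :
    (commonBall p x y).card < (commonBall p x (flipOn {i} y)).card := by
  have hflip := hammingDist_flipOn_singleton_of_ne hi
  have hxi : x i = flipOn {i} y i := by
    rw [flipOn_of_mem (Finset.mem_singleton_self i)]
    exact Bool.eq_not_of_ne hi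
  obtain ⟨z, hzx, hzy, hzi⟩ := exists_equidistant (by omega) hxi hp hpn
  have hzflip := hammingDist_flipOn_singleton_of_ne (hzi.trans_ne hi)
  rw [← Finset.card_sdiff_lt_card_sdiff_iff,
    ← Finset.card_image_of_injective _ (flipOn_involutive {i}).injective]
  -- The flip at `i` injects one difference into the other and misses `z`, whose distance to `x`
  -- is exactly `p`.
  refine Finset.card_lt_card (Finset.ssubset_iff_of_subset ?_ |>.2 ⟨z, ?_, ?_⟩)
  · exact Finset.image_subset_iff.2 fun u hu => (flipOn_mem_commonBall_sdiff hi hu).1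
  · simp only [Finset.mem_sdiff, mem_commonBall]
    omega
  · intro hz
    obtain ⟨u, hu, rfl⟩ := Finset.mem_image.1 hz
    exact (flipOn_mem_commonBall_sdiff hi hu).2.ne hzx

lemma card_commonBall_le_of_hammingDist_le (p : ℕ) {x y x' y' : ι → Bool}
    (h : hammingDist x y ≤ hammingDist x' y') :
    (commonBall p x' y').card ≤ (commonBall p x y).card := by
  obtain ⟨m, hm⟩ := Nat.exists_eq_add_of_le h
  clear h
  induction m generalizing y' with
  | zero => exact (card_commonBall_eq_of_hammingDist_eq p hm).le
  | succ m ih =>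
    obtain ⟨i, hi⟩ := Function.ne_iff.1 (hammingDist_pos.1 (by omega : 0 < hammingDist x' y'))
    have hflip := hammingDist_flipOn_singleton_of_ne hi
    exact (card_commonBall_le_card_commonBall_flipOn p hi).trans (ih (by omega))

lemma card_commonBall_lt_of_hammingDist_le_two_lt {p : ℕ} (hp : 1 ≤ p)
    (hpn : p + 2 ≤ Fintype.card ι) {x y x' y' : ι → Bool} (h : hammingDist x y ≤ 2)
    (h' : 2 < hammingDist x' y') :
    (commonBall p x' y').card < (commonBall p x y).card := by
  obtain ⟨u, hu, -⟩ := exists_hammingDist_eq_of_le (Nat.succ_le_of_lt h')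
  obtain ⟨i, hi⟩ := Function.ne_iff.1 (hammingDist_pos.1 (by omega : 0 < hammingDist x' u))
  have hflip := hammingDist_flipOn_singleton_of_ne hi
  calc (commonBall p x' y').card
      ≤ (commonBall p x' u).card := card_commonBall_le_of_hammingDist_le p (by omega)
    _ < (commonBall p x' (flipOn {i} u)).card :=
        card_commonBall_lt_card_commonBall_flipOn hp hpn hi hu
    _ ≤ (commonBall p x y).card := card_commonBall_le_of_hammingDist_le p (by omega)

end Flip

section BinaryCube

variable {ι : Type*} [Fintype ι]

lemma even_hammingDist_add_add (x y z : ι → Bool) :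
    Even (hammingDist z x + hammingDist z y + hammingDist x y) := by
  simp only [hammingDist, Finset.card_filter, ← Finset.sum_add_distrib]
  refine Finset.even_sum _ fun i _ => ?_
  cases x i <;> cases y i <;> cases z i <;> decide

lemma hammingDist_eq_two_iff {p : ℕ} (hp : 1 ≤ p) (hpn : p + 2 ≤ Fintype.card ι)
    {x y : ι → Bool} :
    hammingDist x y = 2 ↔ x ≠ y ∧ hammingDist x y ≤ 2 ∧
      ∃ z, hammingDist z x = p + 1 ∧ hammingDist z y = p + 1 := by
  classical
  constructor
  · intro hxy
    refine ⟨hammingDist_pos.1 (by omega), hxy.le, ?_⟩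
    obtain ⟨i, hi⟩ : ∃ i, x i = y i := by
      by_contra! hne
      have : hammingDist x y = Fintype.card ι := by simp [hammingDist, hne]
      omega
    obtain ⟨z, hzx, hzy, hzi⟩ := exists_equidistant hxy hi hp hpn
    refine ⟨flipOn {i} z, ?_, ?_⟩
    · rw [hammingDist_comm, hammingDist_flipOn_singleton_of_eq hzi.symm, hammingDist_comm, hzx]
    · rw [hammingDist_comm, hammingDist_flipOn_singleton_of_eq (hi.symm.trans hzi.symm),
        hammingDist_comm, hzy]
  · rintro ⟨hne, hle, z, hzx, hzy⟩
    have hpos := hammingDist_pos.2 hne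
    obtain ⟨k, hk⟩ := even_hammingDist_add_add x y z
    omega

namespace PreservesHammingLE

variable {p : ℕ} {π : Equiv.Perm (ι → Bool)}

lemma two (hπ : PreservesHammingLE p π) (hp : 1 ≤ p) (hpn : p + 2 ≤ Fintype.card ι) :
    PreservesHammingLE 2 π := by
  classical
  intro x y
  have hcard := hπ.card_commonBall x y
  constructor <;> intro h <;> by_contra! h'
  · exact (card_commonBall_lt_of_hammingDist_le_two_lt hp hpn h h').ne' hcard
  · exact (card_commonBall_lt_of_hammingDist_le_two_lt hp hpn h h').ne hcard

lemma one (hπ : PreservesHammingLE p π) (hp : Odd p) (hpn : p + 2 ≤ Fintype.card ι) :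
    PreservesHammingLE 1 π := by
  have htwo : PreservesHammingLE 2 π := hπ.two hp.pos hpn
  have hsucc : PreservesHammingLE (p + 1) π := by
    obtain ⟨m, hm⟩ := even_iff_two_dvd.1 hp.add_one
    rw [hm, mul_comm]
    exact htwo.mul_left m
  intro x y
  have hexact : hammingDist (π x) (π y) = 2 ↔ hammingDist x y = 2 := by
    rw [hammingDist_eq_two_iff hp.pos hpn, hammingDist_eq_two_iff hp.pos hpn, π.surjective.exists]
    simp only [π.injective.ne_iff, htwo x y, hπ.eq_succ_iff hsucc]
  have := htwo x y
  omega

end PreservesHammingLE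

end BinaryCube

lemma gpow_one {V : Type*} (G : SimpleGraph V) : gpow G 1 = G := by
  ext v w
  constructor
  · rintro ⟨hne, hreach, hle⟩
    exact SimpleGraph.dist_eq_one_iff_adj.1 (hle.antisymm (hreach.pos_dist_of_ne hne))
  · exact fun h => ⟨h.ne, h.reachable, (SimpleGraph.dist_eq_one_iff_adj.2 h).le⟩

section Q

variable {n : ℕ}

lemma Q_adj_iff {v w : Fin n → Bool} : (Q n).Adj v w ↔ hammingDist v w = 1 := Iff.rfl

lemma hammingDist_le_length {v w : Fin n → Bool} (q : (Q n).Walk v w) :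
    hammingDist v w ≤ q.length := by
  induction q with
  | nil => simp
  | @cons u v w huv q ih =>
    have := hammingDist_triangle u v w
    rw [Q_adj_iff] at huv
    rw [SimpleGraph.Walk.length_cons]
    omega

lemma exists_walk_length_eq_hammingDist (v w : Fin n → Bool) :
    ∃ q : (Q n).Walk v w, q.length = hammingDist v w := by
  induction hm : hammingDist v w generalizing w with
  | zero =>
    obtain rfl := hammingDist_eq_zero.1 hm
    exact ⟨.nil, rfl⟩
  | succ m ih =>
    obtain ⟨u, hvu, huw, -⟩ := exists_hammingDist_eq_of_le (hm ▸ m.le_succ : m ≤ hammingDist v w)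
    obtain ⟨q, hq⟩ := ih u hvu
    exact ⟨q.concat (Q_adj_iff.2 (by omega)), by rw [SimpleGraph.Walk.length_concat, hq]⟩

lemma Q_reachable (v w : Fin n → Bool) : (Q n).Reachable v w :=
  (exists_walk_length_eq_hammingDist v w).elim fun q _ => ⟨q⟩

lemma Q_dist (v w : Fin n → Bool) : (Q n).dist v w = hammingDist v w := by
  obtain ⟨q, hq⟩ := exists_walk_length_eq_hammingDist v w
  obtain ⟨q', hq'⟩ := (Q_reachable v w).exists_walk_length_eq_dist
  exact le_antisymm (hq ▸ SimpleGraph.dist_le q) (hq' ▸ hammingDist_le_length q')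

lemma gpow_Q_adj_iff {p : ℕ} {v w : Fin n → Bool} :
    (gpow (Q n) p).Adj v w ↔ v ≠ w ∧ hammingDist v w ≤ p := by
  simp only [gpow, Q_reachable, Q_dist, true_and]

lemma isAuto_gpow_Q_iff {p : ℕ} {π : Equiv.Perm (Fin n → Bool)} :
    IsAuto (gpow (Q n) p) π ↔ PreservesHammingLE p π := by
  simp only [IsAuto, PreservesHammingLE, gpow_Q_adj_iff, π.injective.ne_iff]
  refine forall₂_congr fun v w => ?_
  obtain rfl | hne := eq_or_ne v w <;> simp [*]

lemma isAuto_Q_iff {π : Equiv.Perm (Fin n → Bool)} :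
    IsAuto (Q n) π ↔ PreservesHammingLE 1 π := by
  rw [← isAuto_gpow_Q_iff, gpow_one]

end Q

theorem stmt_3 (n p : ℕ) (h1 : 2 < p) (h2 : p < n - 1) (hodd : Odd p) :
    ∀ π : Equiv.Perm (Fin n → Bool), IsAuto (gpow (Q n) p) π ↔ IsAuto (Q n) π := by
  intro π
  rw [isAuto_gpow_Q_iff, isAuto_Q_iff]
  refine ⟨fun h => h.one hodd ?_, fun h => by simpa only [mul_one] using h.mul_left p⟩
  rw [Fintype.card_fin]
  omega
end

section
/- There is no distinguishing 2-coloring of AQ_3: for every coloring c of the vertices of AQ_3 with 2 colors, there exists a nontrivial automorphism of AQ_3 that preserves c. -/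
/-- The `n`-dimensional augmented cube: vertices are `{0,1}^n`; distinct vertices `a`, `b`
are adjacent iff either (1) they differ in exactly one coordinate `l`, or (2) there is an
`l` such that they agree on all coordinates before `l` and differ on all coordinates from
`l` on. -/
def AQ (n : ℕ) : SimpleGraph (Fin n → Bool) where
  Adj a b := (∃ l, a l ≠ b l ∧ ∀ i, i ≠ l → a i = b i) ∨
             (∃ l, (∀ i, i < l → a i = b i) ∧ ∀ i, l ≤ i → a i ≠ b i)
  symm := by
    refine ⟨?_⟩
    rintro a b (⟨l, h1, h2⟩ | ⟨l, h1, h2⟩)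
    · exact Or.inl ⟨l, h1.symm, fun i hi => (h2 i hi).symm⟩
    · exact Or.inr ⟨l, fun i hi => (h1 i hi).symm, fun i hi => (h2 i hi).symm⟩
  loopless := by
    refine ⟨?_⟩
    rintro a (⟨l, h1, _⟩ | ⟨l, _, h2⟩)
    · exact h1 rfl
    · exact h2 l le_rfl rfl

/-!
In `AQ 3` every word of odd weight is adjacent to every word of even weight, so an automorphism of
the subgraph on the four words of even weight extends by the identity. That subgraph consists of
two disjoint edges, the diagonals of a 4-cycle, and any 2-coloring of the corners of a square is
preserved by one of its four reflections.
-/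

/-- A homogeneous set (or *module*) of a graph: a set of vertices that no outside vertex can
tell apart. -/
def IsHomogeneousSet {V : Type*} (G : SimpleGraph V) (S : Set V) : Prop :=
  ∀ u ∈ S, ∀ v ∈ S, ∀ w ∉ S, G.Adj u w ↔ G.Adj v w

section ExtensionByIdentity

variable {V W γ : Type*} {H : SimpleGraph W} {G : SimpleGraph V} {σ : Equiv.Perm W}

theorem IsAuto.viaEmbedding (f : H ↪g G) (hσ : IsAuto H σ)
    (hf : IsHomogeneousSet G (Set.range f)) : IsAuto G (σ.viaEmbedding f.toEmbedding) := by
  have inside (i : W) : σ.viaEmbedding f.toEmbedding (f i) = f (σ i) :=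
    σ.viaEmbedding_apply f.toEmbedding i
  have outside {v : V} (hv : v ∉ Set.range f) : σ.viaEmbedding f.toEmbedding v = v :=
    σ.viaEmbedding_apply_of_notMem f.toEmbedding v hv
  have across (i : W) {w : V} (hw : w ∉ Set.range f) : G.Adj (f (σ i)) w ↔ G.Adj (f i) w :=
    hf _ ⟨σ i, rfl⟩ _ ⟨i, rfl⟩ w hw
  intro v w
  by_cases hv : v ∈ Set.range f <;> by_cases hw : w ∈ Set.range f
  · obtain ⟨i, rfl⟩ := hv
    obtain ⟨j, rfl⟩ := hw
    rw [inside, inside, f.map_adj_iff, f.map_adj_iff, hσ]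
  · obtain ⟨i, rfl⟩ := hv
    rw [inside, outside hw, across i hw]
  · obtain ⟨j, rfl⟩ := hw
    rw [inside, outside hv, G.adj_comm, across j hv, G.adj_comm]
  · rw [outside hv, outside hw]

theorem viaEmbedding_preserves_coloring (f : W ↪ V) (c : V → γ)
    (hσ : ∀ i, c (f (σ i)) = c (f i)) (v : V) : c (σ.viaEmbedding f v) = c v := by
  by_cases hv : v ∈ Set.range f
  · obtain ⟨i, rfl⟩ := hv
    rw [σ.viaEmbedding_apply, hσ]
  · rw [σ.viaEmbedding_apply_of_notMem f v hv]

theorem viaEmbedding_ne_one (f : W ↪ V) (hσ : σ ≠ 1) : σ.viaEmbedding f ≠ 1 :=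
  (map_ne_one_iff _ (Equiv.Perm.viaEmbeddingHom_injective f)).mpr hσ

end ExtensionByIdentity

theorem isAuto_circulantGraph_subLeft {A : Type*} [AddCommGroup A] (s : Set A) (a : A) :
    IsAuto (SimpleGraph.circulantGraph s) (Equiv.subLeft a) := by
  intro u v
  simp only [SimpleGraph.circulantGraph_adj, Equiv.subLeft_apply, sub_sub_sub_cancel_left,
    sub_right_inj, or_comm]

theorem exists_reflection_preserving_coloring (c : Fin 4 → Fin 2) :
    ∃ a, ∀ i, c (a - i) = c i := by
  by_cases h₁₃ : c 1 = c 3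
  · exact ⟨0, fun i => by fin_cases i; exacts [rfl, h₁₃.symm, rfl, h₁₃]⟩
  by_cases h₀₂ : c 0 = c 2
  · exact ⟨2, fun i => by fin_cases i; exacts [h₀₂.symm, rfl, h₀₂, rfl]⟩
  by_cases h₀₁ : c 0 = c 1
  · have h₂₃ : c 2 = c 3 := by omega
    exact ⟨1, fun i => by fin_cases i; exacts [h₀₁.symm, h₀₁, h₂₃.symm, h₂₃]⟩
  · have h₀₃ : c 0 = c 3 := by omega
    have h₁₂ : c 1 = c 2 := by omega
    exact ⟨3, fun i => by fin_cases i; exacts [h₀₃.symm, h₁₂.symm, h₁₂, h₀₃]⟩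

instance (n : ℕ) : DecidableRel (AQ n).Adj :=
  fun _ _ => inferInstanceAs (Decidable (_ ∨ _))

/-- The words of even weight in `AQ 3`. They induce two disjoint edges, that is, the circulant
graph on `Fin 4` with connection set `{2}`. -/
def evenWeightWords : SimpleGraph.circulantGraph ({2} : Set (Fin 4)) ↪g AQ 3 where
  toFun := ![![false, false, false], ![true, false, true],
    ![false, true, true], ![true, true, false]]
  inj' := by decide
  map_rel_iff' {i j} := by revert i j; decide

theorem isHomogeneousSet_range_evenWeightWords :
    IsHomogeneousSet (AQ 3) (Set.range evenWeightWords) := by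
  have adj_of_outside : ∀ i w, (∀ j, evenWeightWords j ≠ w) → (AQ 3).Adj (evenWeightWords i) w := by
    decide
  rintro _ ⟨i, rfl⟩ _ ⟨j, rfl⟩ w hw
  have outside : ∀ k, evenWeightWords k ≠ w := fun k hk => hw ⟨k, hk⟩
  exact iff_of_true (adj_of_outside i w outside) (adj_of_outside j w outside)

theorem stmt_15 (c : (Fin 3 → Bool) → Fin 2) :
    ∃ π : Equiv.Perm (Fin 3 → Bool), IsAuto (AQ 3) π ∧ π ≠ 1 ∧ ∀ v, c (π v) = c v := by
  obtain ⟨a, ha⟩ := exists_reflection_preserving_coloring (c ∘ evenWeightWords)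
  have reflection_ne_one : ∀ b : Fin 4, Equiv.subLeft b ≠ 1 := by decide
  exact ⟨Equiv.Perm.viaEmbedding (Equiv.subLeft a) evenWeightWords.toEmbedding,
    (isAuto_circulantGraph_subLeft _ a).viaEmbedding evenWeightWords
      isHomogeneousSet_range_evenWeightWords,
    viaEmbedding_ne_one _ (reflection_ne_one a),
    viaEmbedding_preserves_coloring _ c ha⟩
end

section
/- For n ≥ 4, define the 2-coloring c of the vertices of AQ_n by c(0⋯0) = 2, c(0⋯01) = 1, and c(x_1⋯x_n) = x_n + 1 for every other vertex. Then the only automorphism of AQ_n preserving c is the identity; i.e., c is a distinguishing 2-coloring of AQ_n. -/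
/-!
Write `s_i` for the vector with ones exactly from position `i` on. The `s_i` form a basis of `𝔽₂ⁿ`,
so the edges of `AQ_n` that change the last coordinate, those with difference some `s_i`, form a
hypercube; the other edges have differences `s_i + s_{i+1}`. An automorphism that preserves the
last coordinate is thus an automorphism of the hypercube. If it also fixes `0` and `s_n`, it
permutes the hypercube neighbors of `0` by an automorphism of the path `s_1, …, s_n` fixing the end
`s_n`, hence fixes all of them, and a hypercube automorphism fixing a vertex and all its neighbors
is the identity.

Each color class consists of the vertices with a given last coordinate, with one vertex replaced by
its neighbor `u` across the last coordinate, where `u` is `0` or `s_n`. Edges inside a half of the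
cube have unit vectors as differences and form no triangle, so every monochromatic triangle
contains `u`. For `n ≥ 4`, any other vertex of the class has a monochromatic edge, with difference
`e_1` or `e_3`, whose other end is not adjacent to `u`; that edge lies in no monochromatic triangle,
while every monochromatic edge at `u` does. So a color-preserving automorphism fixes `u`.
-/

open scoped symmDiff
open SimpleGraph (pathGraph pathGraph_adj)

/-- The vertices `v` of `S` such that every edge from `v` to `S` lies in a triangle inside `S`. -/
def triangularVertices {V : Type*} (G : SimpleGraph V) (S : Set V) : Set V :=
  {v ∈ S | ∀ w ∈ S, G.Adj v w → ∃ z ∈ S, G.Adj v z ∧ G.Adj w z}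

theorem IsAuto.apply_mem_triangularVertices {V : Type*} {G : SimpleGraph V} {π : Equiv.Perm V}
    (hπ : IsAuto G π) {S : Set V} (hS : ∀ v, π v ∈ S ↔ v ∈ S) {v : V}
    (hv : v ∈ triangularVertices G S) : π v ∈ triangularVertices G S := by
  refine ⟨(hS v).2 hv.1, fun w hw hvw => ?_⟩
  obtain ⟨w, rfl⟩ := π.surjective w
  obtain ⟨z, hz, hvz, hwz⟩ := hv.2 w ((hS w).1 hw) ((hπ v w).1 hvw)
  exact ⟨π z, (hS z).2 hz, (hπ v z).2 hvz, (hπ w z).2 hwz⟩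

theorem pathGraph_hom_apply_eq_self {m : ℕ} (f : pathGraph (m + 1) →g pathGraph (m + 1))
    (hf : Function.Injective f) (hlast : f (Fin.last m) = Fin.last m) (i : Fin (m + 1)) :
    f i = i := by
  induction i using WellFoundedGT.induction with
  | ind i ih =>
    obtain rfl | hi := eq_or_ne i (Fin.last m)
    · exact hlast
    obtain ⟨k, rfl⟩ := Fin.exists_castSucc_eq.2 hi
    have hadj := f.map_adj (pathGraph_adj.2 (.inl rfl) : (pathGraph _).Adj k.castSucc k.succ)
    rw [ih k.succ k.castSucc_lt_succ, pathGraph_adj, Fin.val_succ] at hadj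
    have hle : k.castSucc ≤ f k.castSucc := by
      rw [Fin.le_def, Fin.val_castSucc]
      omega
    by_contra hne
    exact hne (hf (ih _ (lt_of_le_of_ne hle (Ne.symm hne))))

theorem exists_pathGraph_adj_ne_last {m : ℕ} (hm : 2 ≤ m) {i : Fin (m + 1)} (hi : i ≠ Fin.last m) :
    ∃ j, j ≠ Fin.last m ∧ (pathGraph (m + 1)).Adj i j := by
  have hi' : (i : ℕ) < m := Fin.val_lt_last hi
  simp only [pathGraph_adj, ne_eq, Fin.ext_iff, Fin.val_last]
  by_cases h : (i : ℕ) = 0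
  · exact ⟨⟨1, by omega⟩, by grind, .inl (by grind)⟩
  · exact ⟨⟨i - 1, by omega⟩, by grind, .inr (by grind)⟩

namespace AQ

/-! ### Unit and suffix vectors -/

section Vectors

variable {n : ℕ}

/-- The unit vector `e_i`, the difference of the endpoints of an edge of type (1). -/
def unitVec (i : Fin n) : Fin n → Bool := fun j => decide (j = i)

/-- The vector with ones exactly from position `i` on, the difference of the endpoints of an
edge of type (2). -/
def suffixVec (i : Fin n) : Fin n → Bool := fun j => decide (i ≤ j)

theorem symmDiff_apply_eq_true_iff {x y : Fin n → Bool} {j : Fin n} :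
    (x ∆ y) j = true ↔ x j ≠ y j := by
  rw [Pi.symmDiff_apply, Bool.symmDiff_eq_xor, bne_iff_ne]

theorem symmDiff_apply_eq_false_iff {x y : Fin n → Bool} {j : Fin n} :
    (x ∆ y) j = false ↔ x j = y j := by
  rw [Pi.symmDiff_apply, Bool.symmDiff_eq_xor, bne_eq_false_iff_eq]

theorem symmDiff_eq_unitVec_iff {x y : Fin n → Bool} {i : Fin n} :
    x ∆ y = unitVec i ↔ x i ≠ y i ∧ ∀ j, j ≠ i → x j = y j := by
  simp only [funext_iff, Pi.symmDiff_apply, Bool.symmDiff_eq_xor, unitVec]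
  grind

theorem symmDiff_eq_suffixVec_iff {x y : Fin n → Bool} {i : Fin n} :
    x ∆ y = suffixVec i ↔ (∀ j, j < i → x j = y j) ∧ ∀ j, i ≤ j → x j ≠ y j := by
  simp only [funext_iff, Pi.symmDiff_apply, Bool.symmDiff_eq_xor, suffixVec]
  grind

theorem adj_iff {x y : Fin n → Bool} :
    (AQ n).Adj x y ↔ (∃ i, x ∆ y = unitVec i) ∨ ∃ i, x ∆ y = suffixVec i := by
  simp only [symmDiff_eq_unitVec_iff, symmDiff_eq_suffixVec_iff]
  rfl

theorem unitVec_symmDiff_unitVec_ne (i j k : Fin n) : unitVec i ∆ unitVec j ≠ unitVec k := by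
  intro h
  have hi := congrFun h i
  have hj := congrFun h j
  have hk := congrFun h k
  simp only [Pi.symmDiff_apply, Bool.symmDiff_eq_xor, unitVec] at hi hj hk
  grind

theorem suffixVec_injective : Function.Injective (suffixVec : Fin n → Fin n → Bool) := by
  intro i j h
  have hi := congrFun h i
  have hj := congrFun h j
  simp only [suffixVec, le_refl, decide_true] at hi hj
  exact le_antisymm (of_decide_eq_true hj) (of_decide_eq_true hi.symm)

-- Comparing the entries at `i - 1` and `i` detects whether a suffix starts at `i`.
theorem eq_or_eq_of_suffixVec_symmDiff_eq {i j k l : Fin n} (hij : i ≠ j)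
    (h : suffixVec i ∆ suffixVec j = suffixVec k ∆ suffixVec l) : i = k ∨ i = l := by
  have hi := congrFun h i
  have hpred := congrFun h ⟨i - 1, by omega⟩
  simp only [Pi.symmDiff_apply, Bool.symmDiff_eq_xor, suffixVec, Fin.le_def] at hi hpred
  grind

-- A symmetric difference of two suffixes is an interval, so it cannot skip `i + 1`.
theorem unitVec_symmDiff_unitVec_ne_suffixVec_symmDiff {i j : Fin n} (hij : (i : ℕ) + 1 < j)
    (k l : Fin n) : unitVec i ∆ unitVec j ≠ suffixVec k ∆ suffixVec l := by
  intro h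
  have hi := congrFun h i
  have hmid := congrFun h ⟨i + 1, by omega⟩
  have hj := congrFun h j
  simp only [Pi.symmDiff_apply, Bool.symmDiff_eq_xor, unitVec, suffixVec, Fin.le_def,
    Fin.ext_iff] at hi hmid hj
  grind

end Vectors

variable {m : ℕ}

theorem suffixVec_castSucc_symmDiff_suffixVec_succ (i : Fin m) :
    suffixVec i.castSucc ∆ suffixVec i.succ = unitVec i.castSucc := by
  funext j
  simp only [Pi.symmDiff_apply, Bool.symmDiff_eq_xor, unitVec, suffixVec, Fin.le_def,
    Fin.ext_iff, Fin.val_castSucc, Fin.val_succ]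
  grind

theorem suffixVec_last : suffixVec (Fin.last m) = unitVec (Fin.last m) := by
  funext j
  simp only [suffixVec, unitVec, Fin.last_le_iff]

theorem suffixVec_apply_last (i : Fin (m + 1)) : suffixVec i (Fin.last m) = true :=
  decide_eq_true i.le_last

theorem unitVec_castSucc_apply_last (i : Fin m) : unitVec i.castSucc (Fin.last m) = false :=
  decide_eq_false i.castSucc_ne_last.symm

theorem suffixVec_symmDiff_suffixVec_eq_unitVec_iff {i j : Fin (m + 1)} {k : Fin m} :
    suffixVec i ∆ suffixVec j = unitVec k.castSucc ↔
      i = k.castSucc ∧ j = k.succ ∨ j = k.castSucc ∧ i = k.succ := by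
  rw [← suffixVec_castSucc_symmDiff_suffixVec_succ]
  refine ⟨fun h => ?_, ?_⟩
  · have hk := eq_or_eq_of_suffixVec_symmDiff_eq k.castSucc_lt_succ.ne h.symm
    rcases hk with rfl | rfl
    · exact .inl ⟨rfl, suffixVec_injective (symmDiff_right_injective _ h)⟩
    · rw [symmDiff_comm] at h
      exact .inr ⟨rfl, suffixVec_injective (symmDiff_right_injective _ h)⟩
  · rintro (⟨rfl, rfl⟩ | ⟨rfl, rfl⟩)
    · rfl
    · exact symmDiff_comm _ _

theorem suffixVec_induction {P : (Fin (m + 1) → Bool) → Prop} (bot : P ⊥)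
    (step : ∀ x i, P x → P (x ∆ suffixVec i)) (x : Fin (m + 1) → Bool) : P x := by
  suffices h : ∀ k ≤ m + 1, ∀ x : Fin (m + 1) → Bool,
      (∀ j : Fin (m + 1), (j : ℕ) < k → x j = false) → P x from
    h 0 (Nat.zero_le _) x fun j hj => absurd hj (Nat.not_lt_zero _)
  intro k hk
  induction hk using Nat.decreasingInduction with
  | self =>
    intro x hx
    rwa [show x = ⊥ from funext fun j => hx j j.isLt]
  | of_succ k hk ih =>
    intro x hx
    by_cases hxk : x ⟨k, hk⟩ = true
    · rw [← symmDiff_symmDiff_cancel_right (suffixVec ⟨k, hk⟩) x]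
      refine step _ _ (ih _ fun j hj => ?_)
      simp only [Pi.symmDiff_apply, Bool.symmDiff_eq_xor, suffixVec, Fin.le_def]
      grind
    · exact ih x fun j hj => by grind

/-! ### Edges and the last coordinate -/

theorem adj_and_last_ne_iff {x y : Fin (m + 1) → Bool} :
    (AQ (m + 1)).Adj x y ∧ x (Fin.last m) ≠ y (Fin.last m) ↔ ∃ i, x ∆ y = suffixVec i := by
  rw [← symmDiff_apply_eq_true_iff, adj_iff]
  constructor
  · rintro ⟨⟨i, hi⟩ | h, hlast⟩
    · obtain ⟨k, rfl⟩ | rfl := i.eq_castSucc_or_eq_last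
      · rw [hi, unitVec_castSucc_apply_last] at hlast
        contradiction
      · exact ⟨Fin.last m, hi.trans suffixVec_last.symm⟩
    · exact h
  · rintro ⟨i, hi⟩
    exact ⟨.inr ⟨i, hi⟩, by rw [hi, suffixVec_apply_last]⟩

theorem adj_and_last_eq_iff {x y : Fin (m + 1) → Bool} :
    (AQ (m + 1)).Adj x y ∧ x (Fin.last m) = y (Fin.last m) ↔
      ∃ i : Fin m, x ∆ y = unitVec i.castSucc := by
  rw [← symmDiff_apply_eq_false_iff, adj_iff]
  constructor
  · rintro ⟨⟨i, hi⟩ | ⟨i, hi⟩, hlast⟩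
    · obtain ⟨k, rfl⟩ | rfl := i.eq_castSucc_or_eq_last
      · exact ⟨k, hi⟩
      · rw [hi, ← suffixVec_last, suffixVec_apply_last] at hlast
        contradiction
    · rw [hi, suffixVec_apply_last] at hlast
      contradiction
  · rintro ⟨i, hi⟩
    exact ⟨.inl ⟨_, hi⟩, by rw [hi, unitVec_castSucc_apply_last]⟩

theorem adj_symmDiff_suffixVec (x : Fin (m + 1) → Bool) (i : Fin (m + 1)) :
    (AQ (m + 1)).Adj x (x ∆ suffixVec i) :=
  adj_iff.2 (.inr ⟨i, symmDiff_symmDiff_cancel_left _ _⟩)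

theorem adj_symmDiff_suffixVec_iff {x : Fin (m + 1) → Bool} {i j : Fin (m + 1)} :
    (AQ (m + 1)).Adj (x ∆ suffixVec i) (x ∆ suffixVec j) ↔ (pathGraph (m + 1)).Adj i j := by
  have hlast : (x ∆ suffixVec i) (Fin.last m) = (x ∆ suffixVec j) (Fin.last m) := by
    simp only [Pi.symmDiff_apply, suffixVec_apply_last]
  rw [← and_iff_left (a := (AQ (m + 1)).Adj _ _) hlast, adj_and_last_eq_iff,
    symmDiff_symmDiff_symmDiff_comm, symmDiff_self, bot_symmDiff]
  simp only [suffixVec_symmDiff_suffixVec_eq_unitVec_iff, pathGraph_adj]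
  constructor
  · rintro ⟨k, ⟨rfl, rfl⟩ | ⟨rfl, rfl⟩⟩
    · exact .inl rfl
    · exact .inr rfl
  · rintro (h | h)
    · exact ⟨⟨i, by omega⟩, .inl ⟨rfl, Fin.ext h.symm⟩⟩
    · exact ⟨⟨j, by omega⟩, .inr ⟨rfl, Fin.ext h.symm⟩⟩

/-! ### Rigidity -/

section Rigidity

/-- `π` fixes `x` together with all neighbors of `x` in the hypercube formed by the edges of
type (2). -/
def FixesStar (π : Equiv.Perm (Fin (m + 1) → Bool)) (x : Fin (m + 1) → Bool) : Prop :=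
  π x = x ∧ ∀ i, π (x ∆ suffixVec i) = x ∆ suffixVec i

variable {π : Equiv.Perm (Fin (m + 1) → Bool)} (hπ : IsAuto (AQ (m + 1)) π)
  (hlast : ∀ x, π x (Fin.last m) = x (Fin.last m))

include hπ hlast

theorem exists_apply_symmDiff_apply_eq_suffixVec {x y : Fin (m + 1) → Bool} {i : Fin (m + 1)}
    (h : x ∆ y = suffixVec i) : ∃ j, π x ∆ π y = suffixVec j := by
  rw [← adj_and_last_ne_iff, hπ, hlast, hlast]
  exact adj_and_last_ne_iff.2 ⟨i, h⟩

-- In a hypercube two vertices at distance two have exactly two common neighbors, so if one of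
-- these is fixed, then so is the other.
theorem FixesStar.symmDiff_suffixVec {x : Fin (m + 1) → Bool} (hx : FixesStar π x)
    (i : Fin (m + 1)) : FixesStar π (x ∆ suffixVec i) := by
  refine ⟨hx.2 i, fun j => ?_⟩
  obtain rfl | hij := eq_or_ne i j
  · rw [symmDiff_symmDiff_cancel_right, hx.1]
  obtain ⟨k, hk⟩ := exists_apply_symmDiff_apply_eq_suffixVec hπ hlast
    (symmDiff_symmDiff_cancel_left (x ∆ suffixVec i) (suffixVec j))
  obtain ⟨l, hl⟩ := exists_apply_symmDiff_apply_eq_suffixVec hπ hlast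
    (show (x ∆ suffixVec j) ∆ (x ∆ suffixVec i ∆ suffixVec j) = suffixVec i by
      rw [symmDiff_right_comm x (suffixVec i), symmDiff_symmDiff_cancel_left])
  set y := π (x ∆ suffixVec i ∆ suffixVec j) with hy
  rw [hx.2, ← symmDiff_right_inj (a := x ∆ suffixVec i), symmDiff_symmDiff_cancel_left] at hk
  rw [hx.2, ← symmDiff_right_inj (a := x ∆ suffixVec j), symmDiff_symmDiff_cancel_left] at hl
  have hparallelogram : suffixVec i ∆ suffixVec k = suffixVec j ∆ suffixVec l := by
    rwa [hk, symmDiff_assoc, symmDiff_assoc, symmDiff_right_inj] at hl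
  have hik : i ≠ k := by
    rintro rfl
    rw [symmDiff_symmDiff_cancel_right, ← hx.1, hy, π.apply_eq_iff_eq, symmDiff_assoc,
      symmDiff_eq_left, symmDiff_eq_bot] at hk
    exact hij (suffixVec_injective hk)
  obtain rfl := (eq_or_eq_of_suffixVec_symmDiff_eq hik hparallelogram).resolve_left hij
  rw [hl, symmDiff_right_comm]

theorem fixesStar_bot (hbot : π ⊥ = ⊥)
    (hsuffix : π (suffixVec (Fin.last m)) = suffixVec (Fin.last m)) : FixesStar π ⊥ := by
  have himage (i) : ∃ j, π (suffixVec i) = suffixVec j := by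
    simpa only [hbot, bot_symmDiff] using
      exists_apply_symmDiff_apply_eq_suffixVec hπ hlast (bot_symmDiff (suffixVec i))
  choose f hf using himage
  let F : pathGraph (m + 1) →g pathGraph (m + 1) :=
    ⟨f, fun {i j} hij => by
      rw [← adj_symmDiff_suffixVec_iff (x := ⊥)] at hij ⊢
      simpa only [bot_symmDiff, ← hf, hπ _ _] using hij⟩
  have hinj : Function.Injective F := fun i j (hij : f i = f j) =>
    suffixVec_injective (π.injective (by rw [hf, hf, hij]))
  have hFlast : F (Fin.last m) = Fin.last m := suffixVec_injective ((hf _).symm.trans hsuffix)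
  refine ⟨hbot, fun i => ?_⟩
  rw [bot_symmDiff, hf]
  exact congrArg suffixVec (pathGraph_hom_apply_eq_self F hinj hFlast i)

theorem eq_one_of_apply_bot_of_apply_suffixVec_last (hbot : π ⊥ = ⊥)
    (hsuffix : π (suffixVec (Fin.last m)) = suffixVec (Fin.last m)) : π = 1 :=
  Equiv.ext fun x => (suffixVec_induction (P := FixesStar π)
    (fixesStar_bot hπ hlast hbot hsuffix)
    (fun _ i hx => hx.symmDiff_suffixVec hπ hlast i) x).1

end Rigidity

/-! ### Color classes -/

/-- The vertices whose last coordinate differs from that of `u`, with `u` itself exchanged for its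
neighbor across the last coordinate. Both color classes of the coloring have this form. -/
def swappedHalf (u : Fin (m + 1) → Bool) : Set (Fin (m + 1) → Bool) :=
  insert u ({x | x (Fin.last m) ≠ u (Fin.last m)} \ {u ∆ suffixVec (Fin.last m)})

theorem symmDiff_suffixVec_mem_swappedHalf (u : Fin (m + 1) → Bool) {i : Fin (m + 1)}
    (hi : i ≠ Fin.last m) : u ∆ suffixVec i ∈ swappedHalf u :=
  .inr ⟨(adj_and_last_ne_iff.2 ⟨i, symmDiff_symmDiff_cancel_left _ _⟩).2.symm,
    fun h => hi (suffixVec_injective (symmDiff_right_injective _ h))⟩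

theorem self_mem_triangularVertices_swappedHalf (hm : 2 ≤ m) (u : Fin (m + 1) → Bool) :
    u ∈ triangularVertices (AQ (m + 1)) (swappedHalf u) := by
  refine ⟨.inl rfl, fun w hw huw => ?_⟩
  obtain ⟨hwlast, hwne⟩ := hw.resolve_left huw.ne'
  obtain ⟨i, hi⟩ := adj_and_last_ne_iff.1 ⟨huw, Ne.symm hwlast⟩
  obtain rfl : w = u ∆ suffixVec i := by rw [← hi, symmDiff_symmDiff_cancel_left]
  have hi_ne : i ≠ Fin.last m := by
    rintro rfl
    exact hwne rfl
  obtain ⟨j, hj_ne, hij⟩ := exists_pathGraph_adj_ne_last hm hi_ne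
  exact ⟨u ∆ suffixVec j, symmDiff_suffixVec_mem_swappedHalf u hj_ne,
    adj_symmDiff_suffixVec u j, adj_symmDiff_suffixVec_iff.2 hij⟩

theorem not_triangle_of_last_eq {x y z : Fin (m + 1) → Bool}
    (hxy : x (Fin.last m) = y (Fin.last m)) (hxz : x (Fin.last m) = z (Fin.last m))
    (hadj_xy : (AQ (m + 1)).Adj x y) (hadj_xz : (AQ (m + 1)).Adj x z) :
    ¬ (AQ (m + 1)).Adj y z := by
  intro hadj_yz
  obtain ⟨i, hi⟩ := adj_and_last_eq_iff.1 ⟨hadj_xy, hxy⟩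
  obtain ⟨j, hj⟩ := adj_and_last_eq_iff.1 ⟨hadj_xz, hxz⟩
  obtain ⟨k, hk⟩ := adj_and_last_eq_iff.1 ⟨hadj_yz, hxy.symm.trans hxz⟩
  refine unitVec_symmDiff_unitVec_ne i.castSucc j.castSucc k.castSucc ?_
  rw [← hi, ← hj, ← hk, symmDiff_symmDiff_symmDiff_comm, symmDiff_self, bot_symmDiff]

theorem exists_unitVec_symmDiff_ne_suffixVec (hm : 3 ≤ m) (x : Fin (m + 1) → Bool) :
    ∃ i : Fin m, ∀ k, x ∆ unitVec i.castSucc ≠ suffixVec k := by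
  by_contra! h
  obtain ⟨k, hk⟩ := h ⟨0, by omega⟩
  obtain ⟨l, hl⟩ := h ⟨2, by omega⟩
  refine unitVec_symmDiff_unitVec_ne_suffixVec_symmDiff (i := Fin.castSucc ⟨0, by omega⟩)
    (j := Fin.castSucc ⟨2, by omega⟩) Nat.one_lt_two k l ?_
  rw [← hk, ← hl, symmDiff_symmDiff_symmDiff_comm, symmDiff_self, bot_symmDiff]

theorem eq_of_mem_triangularVertices_swappedHalf (hm : 3 ≤ m) {u v : Fin (m + 1) → Bool}
    (hv : v ∈ triangularVertices (AQ (m + 1)) (swappedHalf u)) : v = u := by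
  by_contra hvu
  have hvlast : v (Fin.last m) ≠ u (Fin.last m) := (hv.1.resolve_left hvu).1
  obtain ⟨i, hi⟩ := exists_unitVec_symmDiff_ne_suffixVec hm (u ∆ v)
  set w := v ∆ unitVec i.castSucc
  have ⟨hvw, hvw_last⟩ : (AQ (m + 1)).Adj v w ∧ v (Fin.last m) = w (Fin.last m) :=
    adj_and_last_eq_iff.2 ⟨i, symmDiff_symmDiff_cancel_left _ _⟩
  have hwlast : w (Fin.last m) ≠ u (Fin.last m) := hvw_last ▸ hvlast
  have huw (k) : u ∆ w ≠ suffixVec k := by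
    rw [← symmDiff_assoc]
    exact hi k
  have hw : w ∈ swappedHalf u := by
    refine .inr ⟨hwlast, fun h => huw (Fin.last m) ?_⟩
    rw [Set.mem_singleton_iff.1 h, symmDiff_symmDiff_cancel_left]
  obtain ⟨z, rfl | ⟨hzlast, -⟩, hvz, hwz⟩ := hv.2 w hw hvw
  · obtain ⟨k, hk⟩ := adj_and_last_ne_iff.1 ⟨hwz.symm, hwlast.symm⟩
    exact huw k hk
  · have hvz_last : v (Fin.last m) = z (Fin.last m) :=
      (Bool.eq_not_of_ne hvlast).trans (Bool.eq_not_of_ne hzlast).symm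
    exact not_triangle_of_last_eq hvw_last hvz_last hvw hvz hwz

theorem triangularVertices_swappedHalf (hm : 3 ≤ m) (u : Fin (m + 1) → Bool) :
    triangularVertices (AQ (m + 1)) (swappedHalf u) = {u} :=
  Set.eq_singleton_iff_unique_mem.2
    ⟨self_mem_triangularVertices_swappedHalf (by omega) u,
      fun _ => eq_of_mem_triangularVertices_swappedHalf hm⟩

theorem apply_eq_self_of_mem_swappedHalf_iff (hm : 3 ≤ m) {π : Equiv.Perm (Fin (m + 1) → Bool)}
    (hπ : IsAuto (AQ (m + 1)) π) {u : Fin (m + 1) → Bool}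
    (hmem : ∀ x, π x ∈ swappedHalf u ↔ x ∈ swappedHalf u) : π u = u := by
  have h := hπ.apply_mem_triangularVertices hmem
    (self_mem_triangularVertices_swappedHalf (by omega) u)
  rwa [triangularVertices_swappedHalf hm] at h

theorem apply_last_eq_of_mem_swappedHalf_iff {π : Equiv.Perm (Fin (m + 1) → Bool)}
    {u : Fin (m + 1) → Bool} (hu : π u = u)
    (hu' : π (u ∆ suffixVec (Fin.last m)) = u ∆ suffixVec (Fin.last m))
    (hmem : ∀ x, π x ∈ swappedHalf u ↔ x ∈ swappedHalf u) (x : Fin (m + 1) → Bool) :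
    π x (Fin.last m) = x (Fin.last m) := by
  by_cases hx : x = u
  · rw [hx, hu]
  by_cases hx' : x = u ∆ suffixVec (Fin.last m)
  · rw [hx', hu']
  have hπx : π x ≠ u := fun h => hx (π.injective (h.trans hu.symm))
  have hπx' : π x ≠ u ∆ suffixVec (Fin.last m) := fun h => hx' (π.injective (h.trans hu'.symm))
  have hiff := hmem x
  simp only [swappedHalf, Set.mem_insert_iff, Set.mem_sdiff, Set.mem_ofPred_eq,
    Set.mem_singleton_iff, hx, hx', hπx, hπx', false_or, not_false_eq_true, and_true] at hiff
  by_cases h : x (Fin.last m) = u (Fin.last m)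
  · exact (not_not.1 fun hπ => hiff.1 hπ h).trans h.symm
  · exact (Bool.eq_not_of_ne (hiff.2 h)).trans (Bool.eq_not_of_ne h).symm

/-- The coloring of the theorem, with the vertex `0⋯0` written as `⊥` and `0⋯01` as the last
suffix vector. -/
def coloring (x : Fin (m + 1) → Bool) : ℕ :=
  if x = ⊥ then 2
  else if x = suffixVec (Fin.last m) then 1
  else (if x (Fin.last m) then 1 else 0) + 1

theorem coloring_eq_two_iff {x : Fin (m + 1) → Bool} : coloring x = 2 ↔ x ∈ swappedHalf ⊥ := by
  simp only [coloring, swappedHalf, Set.mem_insert_iff, Set.mem_sdiff, Set.mem_ofPred_eq,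
    Set.mem_singleton_iff, bot_symmDiff, Pi.bot_apply, bot_eq_false]
  grind

theorem coloring_eq_one_iff {x : Fin (m + 1) → Bool} :
    coloring x = 1 ↔ x ∈ swappedHalf (suffixVec (Fin.last m)) := by
  have hne : suffixVec (Fin.last m) ≠ ⊥ := fun h => by
    simpa [suffixVec_apply_last] using congrFun h (Fin.last m)
  simp only [coloring, swappedHalf, Set.mem_insert_iff, Set.mem_sdiff, Set.mem_ofPred_eq,
    Set.mem_singleton_iff, symmDiff_self, suffixVec_apply_last]
  grind

end AQ

theorem stmt_17 (n : ℕ) (hn : 4 ≤ n) (c : (Fin n → Bool) → ℕ)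
    (hc : ∀ x : Fin n → Bool,
      c x = if x = (fun _ => false) then 2
            else if x = (fun i : Fin n => decide ((i : ℕ) = n - 1)) then 1
            else (if x ⟨n - 1, by omega⟩ then 1 else 0) + 1) :
    ∀ π : Equiv.Perm (Fin n → Bool), IsAuto (AQ n) π → (∀ v, c (π v) = c v) → π = 1 := by
  obtain ⟨m, rfl⟩ : ∃ m, n = m + 1 := ⟨n - 1, by omega⟩
  have hm : 3 ≤ m := by omega
  have hlastVec : AQ.suffixVec (Fin.last m) = fun i => decide (i.val = m) := by
    rw [AQ.suffixVec_last]
    exact funext fun _ => decide_eq_decide.2 Fin.ext_iff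
  obtain rfl : c = AQ.coloring := funext fun x => by
    rw [hc, AQ.coloring, hlastVec]
    rfl
  intro π hπ hcol
  have htwo (x) : π x ∈ AQ.swappedHalf ⊥ ↔ x ∈ AQ.swappedHalf ⊥ := by
    rw [← AQ.coloring_eq_two_iff, ← AQ.coloring_eq_two_iff, hcol]
  have hone (x) : π x ∈ AQ.swappedHalf (AQ.suffixVec (Fin.last m)) ↔
      x ∈ AQ.swappedHalf (AQ.suffixVec (Fin.last m)) := by
    rw [← AQ.coloring_eq_one_iff, ← AQ.coloring_eq_one_iff, hcol]
  have hbot : π ⊥ = ⊥ := AQ.apply_eq_self_of_mem_swappedHalf_iff hm hπ htwo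
  have hsuffix : π (AQ.suffixVec (Fin.last m)) = AQ.suffixVec (Fin.last m) :=
    AQ.apply_eq_self_of_mem_swappedHalf_iff hm hπ hone
  have hlast := AQ.apply_last_eq_of_mem_swappedHalf_iff hbot (by rwa [bot_symmDiff]) htwo
  exact AQ.eq_one_of_apply_bot_of_apply_suffixVec_last hπ hlast hbot hsuffix
end
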